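/- arXiv:2505.03959 — 3 statements merged into one kernel-verified Lean document; each statement's English description precedes it below -/
import Mathlib

section
/- There exists a bipartite graph G = (A, B, E) such that bcevs(G) < bceovs(G, A); in fact there is such a graph with bcevs(G) = 2 and bceovs(G, A) = 3. -/
/- Common framework: bipartite graphs on vertex set `ℕ` with side labels,
   edge editions, vertex splittings, and the bicluster-editing numbers. -/

namespace BCE

/-- A graph on a finite subset of `ℕ` equipped with a labelling of its
vertices into two sides `A` and `B`. -/
structure BGraph where
  A : Set ℕ
  B : Set ℕ
  finA : A.Finite
  finB : B.Finite
  Adj : ℕ → ℕ → Prop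
  symm : ∀ u v, Adj u v → Adj v u

/-- The vertex set of a graph. -/
def verts (G : BGraph) : Set ℕ := G.A ∪ G.B

/-- The open neighbourhood of a vertex. -/
def nbhd (G : BGraph) (v : ℕ) : Set ℕ := {u | G.Adj v u}

/-- `G = (A, B, E)` is bipartite: the sides are disjoint and every edge joins
a vertex of `A` with a vertex of `B`. -/
def Bipartite (G : BGraph) : Prop :=
  Disjoint G.A G.B ∧
    ∀ u v, G.Adj u v → (u ∈ G.A ∧ v ∈ G.B) ∨ (u ∈ G.B ∧ v ∈ G.A)

/-- A (bipartite) graph is a disjoint union of bicliques iff whenever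
`a-b-c-d` is a walk, `a` and `d` are adjacent (equivalently, every connected
component is a complete bipartite graph). -/
def IsBicliqueUnion (G : BGraph) : Prop :=
  ∀ a b c d, G.Adj a b → G.Adj b c → G.Adj c d → G.Adj a d

/-- The editing operations: deletion of an edge, addition of an edge, and
splitting of a vertex `v` into `v` and a fresh vertex `v'` whose
neighbourhoods `N1`, `N2` cover the neighbourhood of `v`. -/
inductive Op where
  | del : ℕ → ℕ → Op
  | add : ℕ → ℕ → Op
  | split : ℕ → ℕ → Set ℕ → Set ℕ → Op

/-- `op` is a vertex splitting. -/
def IsSplitOp : Op → Prop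
  | Op.split _ _ _ _ => True
  | _ => False

/-- `OpStep sA sB op G G'` : performing the single operation `op` on `G`
yields `G'`; vertex splittings are allowed on side `A` (resp. `B`) only if
`sA` (resp. `sB`) is `true`.  A copy created by a splitting is put on the
same side as the split vertex. -/
inductive OpStep (sA sB : Bool) : Op → BGraph → BGraph → Prop where
  | del {G G' : BGraph} {u v : ℕ}
      (h : G.Adj u v) (hA : G'.A = G.A) (hB : G'.B = G.B)
      (hadj : ∀ x y, G'.Adj x y ↔
        (G.Adj x y ∧ ¬((x = u ∧ y = v) ∨ (x = v ∧ y = u)))) :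
      OpStep sA sB (Op.del u v) G G'
  | add {G G' : BGraph} {u v : ℕ}
      (hu : u ∈ G.A) (hv : v ∈ G.B) (h : ¬ G.Adj u v)
      (hA : G'.A = G.A) (hB : G'.B = G.B)
      (hadj : ∀ x y, G'.Adj x y ↔
        (G.Adj x y ∨ (x = u ∧ y = v) ∨ (x = v ∧ y = u))) :
      OpStep sA sB (Op.add u v) G G'
  | split {G G' : BGraph} {v v' : ℕ} {N1 N2 : Set ℕ}
      (hside : (v ∈ G.A ∧ sA = true) ∨ (v ∈ G.B ∧ sB = true))
      (hfresh : v' ∉ verts G)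
      (hcover : N1 ∪ N2 = nbhd G v)
      (hA : v ∈ G.A → G'.A = insert v' G.A ∧ G'.B = G.B)
      (hB : v ∈ G.B → G'.A = G.A ∧ G'.B = insert v' G.B)
      (hadj : ∀ x y, G'.Adj x y ↔
        ((G.Adj x y ∧ x ≠ v ∧ y ≠ v) ∨ (x = v ∧ y ∈ N1) ∨ (y = v ∧ x ∈ N1) ∨
          (x = v' ∧ y ∈ N2) ∨ (y = v' ∧ x ∈ N2))) :
      OpStep sA sB (Op.split v v' N1 N2) G G'

/-- `ApplySeq sA sB L G G'` : applying the sequence of operations `L`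
to `G` yields `G'`. -/
def ApplySeq (sA sB : Bool) : List Op → BGraph → BGraph → Prop
  | [], G, G' => G' = G
  | op :: L, G, G'' => ∃ G', OpStep sA sB op G G' ∧ ApplySeq sA sB L G' G''

/-- The sequence `L` transforms `G` into a disjoint union of bicliques. -/
def Solves (sA sB : Bool) (L : List Op) (G : BGraph) : Prop :=
  ∃ G', ApplySeq sA sB L G G' ∧ IsBicliqueUnion G'

/-- `bcevs G` : the minimum length of a sequence of edge editions and vertex
splittings transforming `G` into a disjoint union of bicliques. -/
noncomputable def bcevs (G : BGraph) : ℕ :=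
  sInf {n | ∃ L, L.length = n ∧ Solves true true L G}

/-- `bceovs G` (that is, `bceovs(G, A)`) : the minimum length of such a
sequence in which vertex splittings are applied only to vertices of the side
`A` (and their copies, which are also on side `A`). -/
noncomputable def bceovs (G : BGraph) : ℕ :=
  sInf {n | ∃ L, L.length = n ∧ Solves true false L G}

/-- The subgraph of `G` induced by `S`. -/
def induce (G : BGraph) (S : Set ℕ) : BGraph where
  A := G.A ∩ S
  B := G.B ∩ S
  finA := G.finA.subset Set.inter_subset_left
  finB := G.finB.subset Set.inter_subset_left
  Adj := fun u v => G.Adj u v ∧ u ∈ S ∧ v ∈ S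
  symm := fun u v h => ⟨G.symm u v h.1, h.2.2, h.2.1⟩

/-- `G` is a tree (as an abstract graph on its vertex set). -/
def IsTreeB (G : BGraph) : Prop :=
  (SimpleGraph.induce (verts G) (SimpleGraph.fromRel G.Adj)).IsTree

/-- `G` is connected. -/
def ConnectedB (G : BGraph) : Prop :=
  (SimpleGraph.induce (verts G) (SimpleGraph.fromRel G.Adj)).Connected

/-- The set `S` induces a biclique in `G`: every vertex of `S` on side `A` is
adjacent to every vertex of `S` on side `B`. -/
def IsBicliqueOn (G : BGraph) (S : Set ℕ) : Prop :=
  ∀ u ∈ S ∩ G.A, ∀ v ∈ S ∩ G.B, G.Adj u v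

/-- The set `S` induces a star in `G`: some centre `c ∈ S` is adjacent to all
other vertices of `S`, and every edge inside `S` uses the centre. -/
def IsStarOn (G : BGraph) (S : Set ℕ) : Prop :=
  ∃ c ∈ S, (∀ v ∈ S, v ≠ c → G.Adj c v) ∧
    (∀ u ∈ S, ∀ v ∈ S, G.Adj u v → u = c ∨ v = c)

/-- An `A`-partitioning cover of `G`: a collection of subsets of `A ∪ B`
covering all vertices whose traces on `A` form a partition of `A` (every
vertex of `A` lies in a unique member of the collection). -/
def IsAPartCover (G : BGraph) (C : Set (Set ℕ)) : Prop :=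
  (∀ X ∈ C, X ⊆ verts G) ∧
  (∀ v ∈ verts G, ∃ X ∈ C, v ∈ X) ∧
  (∀ a ∈ G.A, ∃! X, X ∈ C ∧ a ∈ X)

/-- The cost of an `A`-partitioning cover: each `a ∈ A` lying in the unique
set `X ∈ C` costs `|(B ∩ X) \ N(a)| + |N(a) \ X|`; each `b ∈ B` lying in `j`
members of `C` costs `j - 1`. -/
noncomputable def coverCost (G : BGraph) (C : Set (Set ℕ)) : ℕ :=
  (∑ᶠ a ∈ G.A, ∑ᶠ X ∈ {X ∈ C | a ∈ X},
      (((G.B ∩ X) \ nbhd G a).ncard + ((nbhd G a) \ X).ncard)) +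
  ∑ᶠ b ∈ G.B, ({X ∈ C | b ∈ X}.ncard - 1)

/-- The twin class of a vertex: all vertices of `G` with the same open
neighbourhood. -/
def twinClass (G : BGraph) (v : ℕ) : Set ℕ :=
  {u ∈ verts G | nbhd G u = nbhd G v}

/-- The twin classes of `G`. -/
def twinClasses (G : BGraph) : Set (Set ℕ) :=
  {T | ∃ v ∈ verts G, T = twinClass G v}

/-- A cover is twin-adapted if every member contains each twin class either
entirely or not at all. -/
def TwinAdapted (G : BGraph) (C : Set (Set ℕ)) : Prop :=
  ∀ T ∈ twinClasses G, ∀ X ∈ C, T ∩ X = ∅ ∨ T ⊆ X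

/-- `G` is a cycle with consecutive vertices `p 0, p 1, …, p (m-1)`
(indices modulo `m`), the vertices of even index forming side `A`. -/
def IsCycleWith (G : BGraph) (p : ℕ → ℕ) (m : ℕ) : Prop :=
  (∀ i j, i < m → j < m → p i = p j → i = j) ∧
  G.A = p '' {i | i < m ∧ i % 2 = 0} ∧
  G.B = p '' {i | i < m ∧ i % 2 = 1} ∧
  (∀ x y, G.Adj x y ↔ ∃ i < m,
    (x = p i ∧ y = p ((i + 1) % m)) ∨ (y = p i ∧ x = p ((i + 1) % m)))

/-- `G` is a path with `l` edges and consecutive vertices `p 0, …, p l`,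
the vertices of even index forming side `A`. -/
def IsPathWith (G : BGraph) (p : ℕ → ℕ) (l : ℕ) : Prop :=
  (∀ i j, i ≤ l → j ≤ l → p i = p j → i = j) ∧
  G.A = p '' {i | i ≤ l ∧ i % 2 = 0} ∧
  G.B = p '' {i | i ≤ l ∧ i % 2 = 1} ∧
  (∀ x y, G.Adj x y ↔ ∃ i < l,
    (x = p i ∧ y = p (i + 1)) ∨ (y = p i ∧ x = p (i + 1)))

end BCE

namespace BCE

/-! An induced path on four vertices has to be destroyed by every solution, so a family of such
paths, no two of which can be destroyed by one operation, bounds the solution length from below. An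
edge edition alters a single pair of vertices and a splitting only alters pairs at one vertex. Hence
if only vertices of `A` may be split, the paths of the family may share vertices of `B`.

Glue a `K_{2,1}` and a `K_{2,2}` at a vertex `b` of `B`. Splitting `b` repairs this graph, but it
contains two induced paths that are disjoint on side `A`, so two operations are needed if splittings
are restricted to `A`. A disjoint path on four vertices adds one to both numbers. -/

/-- The path `a₁ - b₁ - a₂ - b₂` on four vertices, with `a₁`, `a₂` meant to lie on side `A` and
`b₁`, `b₂` on side `B`. -/
structure P4 where
  a₁ : ℕ
  b₁ : ℕ
  a₂ : ℕ
  b₂ : ℕ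

namespace P4

variable {sA sB : Bool} {P Q : P4} {G G' : BGraph}

/-- The vertices of the path that are meant to lie on side `A`. -/
def A (P : P4) : Finset ℕ := {P.a₁, P.a₂}

/-- The vertices of the path that are meant to lie on side `B`. -/
def B (P : P4) : Finset ℕ := {P.b₁, P.b₂}

/-- `P` is an induced path of `G`, placed correctly with respect to the two sides. Only the pair
`a₁`, `b₂` is required to be a non-edge: in a bipartite graph the other ones are automatic. -/
structure IsInduced (P : P4) (G : BGraph) : Prop where
  subset_A : ↑P.A ⊆ G.A
  subset_B : ↑P.B ⊆ G.B
  adj_a₁_b₁ : G.Adj P.a₁ P.b₁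
  adj_a₂_b₁ : G.Adj P.a₂ P.b₁
  adj_a₂_b₂ : G.Adj P.a₂ P.b₂
  not_adj_a₁_b₂ : ¬ G.Adj P.a₁ P.b₂

/-- No single operation alters both `P` and `Q`: the paths have no pair of vertices in common that
an edge edition could alter, and no vertex in common on a side where splittings are allowed. -/
def Independent (sA sB : Bool) (P Q : P4) : Prop :=
  (Disjoint P.A Q.A ∨ Disjoint P.B Q.B) ∧
    (sA = true → Disjoint P.A Q.A) ∧ (sB = true → Disjoint P.B Q.B)

instance : Decidable (Independent sA sB P Q) := inferInstanceAs (Decidable (_ ∧ _))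

theorem IsInduced.not_isBicliqueUnion (hP : P.IsInduced G) : ¬ IsBicliqueUnion G := fun hG =>
  hP.not_adj_a₁_b₂ <| hG _ _ _ _ hP.adj_a₁_b₁ (G.symm _ _ hP.adj_a₂_b₁) hP.adj_a₂_b₂

theorem IsInduced.of_adj_iff (hP : P.IsInduced G) (hA : G.A ⊆ G'.A) (hB : G.B ⊆ G'.B)
    (hadj : ∀ a ∈ P.A, ∀ b ∈ P.B, G'.Adj a b ↔ G.Adj a b) : P.IsInduced G' := by
  have ha₁ : P.a₁ ∈ P.A := by simp [A]
  have ha₂ : P.a₂ ∈ P.A := by simp [A]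
  have hb₁ : P.b₁ ∈ P.B := by simp [B]
  have hb₂ : P.b₂ ∈ P.B := by simp [B]
  exact {
    subset_A := hP.subset_A.trans hA
    subset_B := hP.subset_B.trans hB
    adj_a₁_b₁ := (hadj _ ha₁ _ hb₁).2 hP.adj_a₁_b₁
    adj_a₂_b₁ := (hadj _ ha₂ _ hb₁).2 hP.adj_a₂_b₁
    adj_a₂_b₂ := (hadj _ ha₂ _ hb₂).2 hP.adj_a₂_b₂
    not_adj_a₁_b₂ := fun h => hP.not_adj_a₁_b₂ ((hadj _ ha₁ _ hb₂).1 h) }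

end P4

namespace OpStep

variable {sA sB : Bool} {op : Op} {G G' : BGraph} {P Q : P4}

theorem A_subset (h : OpStep sA sB op G G') : G.A ⊆ G'.A := by
  cases h with
  | del _ hA => exact hA.ge
  | add _ _ _ hA => exact hA.ge
  | split hside _ _ hA hB =>
    rcases hside with ⟨hv, -⟩ | ⟨hv, -⟩
    · exact (hA hv).1 ▸ Set.subset_insert _ _
    · exact (hB hv).1.ge

theorem B_subset (h : OpStep sA sB op G G') : G.B ⊆ G'.B := by
  cases h with
  | del _ _ hB => exact hB.ge
  | add _ _ _ _ hB => exact hB.ge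
  | split hside _ _ hA hB =>
    rcases hside with ⟨hv, -⟩ | ⟨hv, -⟩
    · exact (hA hv).2.ge
    · exact (hB hv).2 ▸ Set.subset_insert _ _

theorem disjoint_sides (h : OpStep sA sB op G G') (hG : Disjoint G.A G.B) :
    Disjoint G'.A G'.B := by
  cases h with
  | del _ hA hB => rwa [hA, hB]
  | add _ _ _ hA hB => rwa [hA, hB]
  | split hside hfresh _ hA hB =>
    rcases hside with ⟨hv, -⟩ | ⟨hv, -⟩
    · rw [(hA hv).1, (hA hv).2]
      exact Set.disjoint_insert_left.2 ⟨fun h => hfresh (.inr h), hG⟩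
    · rw [(hB hv).1, (hB hv).2]
      exact Set.disjoint_insert_right.2 ⟨fun h => hfresh (.inl h), hG⟩

theorem eq_of_altered (h : OpStep sA sB op G G') (hG : Disjoint G.A G.B) {a b a' b' : ℕ}
    (ha : a ∈ G.A) (hb : b ∈ G.B) (hab : ¬ (G'.Adj a b ↔ G.Adj a b))
    (ha' : a' ∈ G.A) (hb' : b' ∈ G.B) (hab' : ¬ (G'.Adj a' b' ↔ G.Adj a' b')) :
    (a = a' ∧ b = b') ∨ (sA = true ∧ a = a') ∨ (sB = true ∧ b = b') := by
  have hne : ∀ p ∈ G.A, ∀ q ∈ G.B, p ≠ q := fun _ hp _ hq => hG.ne_of_mem hp hq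
  cases h with
  | @del _ _ u v _ _ _ hadj =>
    have altered {p q} (hpq : ¬ (G'.Adj p q ↔ G.Adj p q)) : p = u ∧ q = v ∨ p = v ∧ q = u := by
      grind
    have := altered hab
    have := altered hab'
    grind
  | @add _ _ u v _ _ _ _ _ hadj =>
    have altered {p q} (hpq : ¬ (G'.Adj p q ↔ G.Adj p q)) : p = u ∧ q = v ∨ p = v ∧ q = u := by
      grind
    have := altered hab
    have := altered hab'
    grind
  | @split _ _ v v' _ _ hside hfresh _ _ _ hadj =>
    have altered {p q} (hp : p ∈ G.A) (hq : q ∈ G.B) (hpq : ¬ (G'.Adj p q ↔ G.Adj p q)) :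
        p = v ∨ q = v := by
      have hpv' : p ≠ v' := fun h => hfresh (.inl (h ▸ hp))
      have hqv' : q ≠ v' := fun h => hfresh (.inr (h ▸ hq))
      grind
    have := altered ha hb hab
    have := altered ha' hb' hab'
    grind

theorem isInduced_of_independent (h : OpStep sA sB op G G') (hG : Disjoint G.A G.B)
    (hPQ : P.Independent sA sB Q) (hP : P.IsInduced G) (hP' : ¬ P.IsInduced G')
    (hQ : Q.IsInduced G) : Q.IsInduced G' := by
  obtain ⟨a, ha, b, hb, hab⟩ : ∃ a ∈ P.A, ∃ b ∈ P.B, ¬ (G'.Adj a b ↔ G.Adj a b) := by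
    contrapose! hP'
    exact hP.of_adj_iff h.A_subset h.B_subset hP'
  refine hQ.of_adj_iff h.A_subset h.B_subset fun a' ha' b' hb' => by_contra fun hab' => ?_
  obtain ⟨hdisj, hsA, hsB⟩ := hPQ
  have heq := h.eq_of_altered hG (hP.subset_A ha) (hP.subset_B hb) hab
    (hQ.subset_A ha') (hQ.subset_B hb') hab'
  simp only [Finset.disjoint_left] at hdisj hsA hsB
  grind

end OpStep

/-- A packing of induced paths on four vertices, any two of which are independent with respect to
the operations allowed by `sA` and `sB`. -/
structure IsPacking (sA sB : Bool) (G : BGraph) (Ps : List P4) : Prop where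
  isInduced : ∀ P ∈ Ps, P.IsInduced G
  independent : Ps.Pairwise (P4.Independent sA sB)

namespace IsPacking

variable {sA sB : Bool} {op : Op} {L : List Op} {G G' : BGraph} {Ps : List P4}

theorem exists_sublist (hPs : IsPacking sA sB G Ps) (hG : Disjoint G.A G.B)
    (h : OpStep sA sB op G G') :
    ∃ Qs, Qs.Sublist Ps ∧ Ps.length ≤ Qs.length + 1 ∧ IsPacking sA sB G' Qs := by
  suffices ∃ Qs : List P4, Qs.Sublist Ps ∧ Ps.length ≤ Qs.length + 1 ∧ ∀ Q ∈ Qs, Q.IsInduced G' by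
    obtain ⟨Qs, hsub, hlen, hQs⟩ := this
    exact ⟨Qs, hsub, hlen, hQs, hPs.independent.sublist hsub⟩
  obtain ⟨hind, hpair⟩ := hPs
  induction Ps with
  | nil => exact ⟨[], by simp⟩
  | cons P Ps ih =>
    rw [List.forall_mem_cons] at hind
    rw [List.pairwise_cons] at hpair
    by_cases hP : P.IsInduced G'
    · obtain ⟨Qs, hsub, hlen, hQs⟩ := ih hind.2 hpair.2
      exact ⟨P :: Qs, hsub.cons_cons P, by simpa using hlen, List.forall_mem_cons.2 ⟨hP, hQs⟩⟩
    · exact ⟨Ps, List.sublist_cons_self P Ps, by simp, fun Q hQ =>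
        h.isInduced_of_independent hG (hpair.1 Q hQ) hind.1 hP (hind.2 Q hQ)⟩

theorem length_le (hPs : IsPacking sA sB G Ps) (hG : Disjoint G.A G.B)
    (hL : Solves sA sB L G) : Ps.length ≤ L.length := by
  induction L generalizing G Ps with
  | nil =>
    obtain ⟨_, rfl, hG'⟩ := hL
    have hnil : Ps = [] := List.eq_nil_iff_forall_not_mem.2 fun P hP =>
      (hPs.isInduced P hP).not_isBicliqueUnion hG'
    simp [hnil]
  | cons op L ih =>
    obtain ⟨G'', ⟨G', hstep, hL⟩, hG''⟩ := hL
    obtain ⟨Qs, -, hlen, hQs⟩ := hPs.exists_sublist hG hstep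
    calc
      Ps.length ≤ Qs.length + 1 := hlen
      _ ≤ L.length + 1 := Nat.succ_le_succ (ih hQs (hstep.disjoint_sides hG) ⟨G'', hL, hG''⟩)
      _ = (op :: L).length := rfl

theorem sInf_length_eq (hPs : IsPacking sA sB G Ps) (hG : Disjoint G.A G.B)
    (hL : Solves sA sB L G) (hlen : L.length = Ps.length) :
    sInf {n | ∃ L, L.length = n ∧ Solves sA sB L G} = Ps.length := by
  refine IsLeast.csInf_eq ⟨⟨L, hlen, hL⟩, ?_⟩
  rintro _ ⟨L', rfl, hL'⟩
  exact hPs.length_le hG hL'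

end IsPacking

section OfEdges

variable {A B N₁ N₂ : Finset ℕ} {E : Finset (ℕ × ℕ)} {a b b' : ℕ}

/-- The graph with sides `A`, `B` and edge set `E`, an edge being listed as a pair whose first
component is its end on side `A`. -/
def ofEdges (A B : Finset ℕ) (E : Finset (ℕ × ℕ)) : BGraph where
  A := A
  B := B
  finA := A.finite_toSet
  finB := B.finite_toSet
  Adj u v := (u, v) ∈ E ∨ (v, u) ∈ E
  symm _ _ h := h.symm

instance : DecidableRel (ofEdges A B E).Adj := fun _ _ => inferInstanceAs (Decidable (_ ∨ _))

instance {P : P4} : Decidable (P.IsInduced (ofEdges A B E)) :=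
  let G := ofEdges A B E
  decidable_of_iff (P.A ⊆ A ∧ P.B ⊆ B ∧ G.Adj P.a₁ P.b₁ ∧ G.Adj P.a₂ P.b₁ ∧ G.Adj P.a₂ P.b₂ ∧
      ¬ G.Adj P.a₁ P.b₂)
    ⟨fun ⟨hA, hB, h₁, h₂, h₃, h₄⟩ =>
        ⟨Finset.coe_subset.2 hA, Finset.coe_subset.2 hB, h₁, h₂, h₃, h₄⟩,
      fun ⟨hA, hB, h₁, h₂, h₃, h₄⟩ =>
        ⟨Finset.coe_subset.1 hA, Finset.coe_subset.1 hB, h₁, h₂, h₃, h₄⟩⟩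

theorem bipartite_ofEdges (hAB : Disjoint A B) (hE : E ⊆ A ×ˢ B) : Bipartite (ofEdges A B E) := by
  refine ⟨Finset.disjoint_coe.2 hAB, fun u v h => h.imp (fun h => ?_) fun h => ?_⟩
  · exact Finset.mem_product.1 (hE h)
  · exact (Finset.mem_product.1 (hE h)).symm

theorem isBicliqueUnion_ofEdges (hAB : Disjoint A B) (hE : E ⊆ A ×ˢ B)
    (h : ∀ e ∈ E, ∀ f ∈ E, ∀ g ∈ E, e.2 = f.2 → f.1 = g.1 → (e.1, g.2) ∈ E) :
    IsBicliqueUnion (ofEdges A B E) := by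
  have hne {u v w} (huv : (u, v) ∈ E) (hvw : (v, w) ∈ E) : False :=
    Finset.disjoint_left.1 hAB (Finset.mem_product.1 (hE hvw)).1 (Finset.mem_product.1 (hE huv)).2
  rintro u v w x (huv | hvu) (hvw | hwv) (hwx | hxw)
  · exact (hne huv hvw).elim
  · exact (hne huv hvw).elim
  · exact .inl (h _ huv _ hwv _ hwx rfl rfl)
  · exact (hne hxw hwv).elim
  · exact (hne hvw hwx).elim
  · exact .inr (h _ hxw _ hvw _ hvu rfl rfl)
  · exact (hne hwv hvu).elim
  · exact (hne hwv hvu).elim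

theorem opStep_del_ofEdges (sA sB : Bool) (hAB : Disjoint A B) (hE : E ⊆ A ×ˢ B)
    (hab : (a, b) ∈ E) :
    OpStep sA sB (.del a b) (ofEdges A B E) (ofEdges A B (E.erase (a, b))) := by
  have hba : (b, a) ∉ E := fun h =>
    Finset.disjoint_left.1 hAB (Finset.mem_product.1 (hE h)).1 (Finset.mem_product.1 (hE hab)).2
  refine .del (.inl hab) rfl rfl fun x y => ?_
  simp only [ofEdges, Finset.mem_erase, ne_eq, Prod.mk.injEq]
  grind

/-- The edge set obtained from `E` by splitting the vertex `b` of side `B` into `b` and `b'`, with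
neighbourhoods `N₁` and `N₂`. -/
def splitEdges (E : Finset (ℕ × ℕ)) (b b' : ℕ) (N₁ N₂ : Finset ℕ) : Finset (ℕ × ℕ) :=
  {e ∈ E | e.2 ≠ b} ∪ N₁ ×ˢ {b} ∪ N₂ ×ˢ {b'}

theorem opStep_split_ofEdges (sA : Bool) (hAB : Disjoint A B) (hE : E ⊆ A ×ˢ B) (hb : b ∈ B)
    (hb' : b' ∉ A ∪ B) (hN : N₁ ∪ N₂ = {a ∈ A | (a, b) ∈ E}) :
    OpStep sA true (.split b b' N₁ N₂) (ofEdges A B E)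
      (ofEdges A (insert b' B) (splitEdges E b b' N₁ N₂)) := by
  have hbA : b ∉ A := Finset.disjoint_right.1 hAB hb
  have hb_left (y) : (b, y) ∉ E := fun h => hbA (Finset.mem_product.1 (hE h)).1
  refine .split (.inr ⟨hb, rfl⟩) (by simpa [verts, ofEdges] using hb') ?_
    (fun h => absurd h hbA) (fun _ => ⟨rfl, Finset.coe_insert _ _⟩) fun x y => ?_
  · rw [← Finset.coe_union, hN]
    ext x
    have hxA : (x, b) ∈ E → x ∈ A := fun h => (Finset.mem_product.1 (hE h)).1
    simpa [nbhd, ofEdges, hb_left] using hxA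
  · simp only [ofEdges, splitEdges, Finset.mem_union, Finset.mem_filter, Finset.mem_product,
      Finset.mem_singleton, Finset.mem_coe]
    grind

end OfEdges

/-- The edges of a `K_{2,1}` with sides `{0, 1}`, `{6}` and a `K_{2,2}` with sides `{2, 3}`,
`{6, 7}`, glued at the vertex `6`, together with those of the path `4 - 8 - 5 - 9`. -/
def gluedEdges : Finset (ℕ × ℕ) :=
  {(0, 6), (1, 6), (2, 6), (3, 6), (2, 7), (3, 7), (4, 8), (5, 8), (5, 9)}

/-- The graph witnessing the theorem: two bicliques glued at the vertex `6` of side `B`, and a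
separate path on four vertices. -/
def glued : BGraph := ofEdges {0, 1, 2, 3, 4, 5} {6, 7, 8, 9} gluedEdges

theorem bipartite_glued : Bipartite glued := bipartite_ofEdges (by decide) (by decide)

theorem solves_glued_of_split :
    Solves true true [.split 6 10 ({0, 1} : Finset ℕ) ({2, 3} : Finset ℕ), .del 5 8] glued :=
  ⟨_, ⟨_, opStep_split_ofEdges _ (by decide) (by decide) (by decide) (by decide) (by decide),
    _, opStep_del_ofEdges _ _ (by decide) (by decide) (by decide), rfl⟩,
    isBicliqueUnion_ofEdges (by decide) (by decide) (by decide)⟩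

theorem solves_glued_of_del (sA sB : Bool) :
    Solves sA sB [.del 2 6, .del 3 6, .del 5 8] glued :=
  ⟨_, ⟨_, opStep_del_ofEdges _ _ (by decide) (by decide) (by decide),
    _, opStep_del_ofEdges _ _ (by decide) (by decide) (by decide),
    _, opStep_del_ofEdges _ _ (by decide) (by decide) (by decide), rfl⟩,
    isBicliqueUnion_ofEdges (by decide) (by decide) (by decide)⟩

theorem bcevs_glued : bcevs glued = 2 := by
  have hPs : IsPacking true true glued [⟨0, 6, 2, 7⟩, ⟨4, 8, 5, 9⟩] :=
    ⟨by unfold glued; decide, by decide⟩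
  exact hPs.sInf_length_eq bipartite_glued.1 solves_glued_of_split rfl

theorem bceovs_glued : bceovs glued = 3 := by
  have hPs : IsPacking true false glued [⟨0, 6, 2, 7⟩, ⟨1, 6, 3, 7⟩, ⟨4, 8, 5, 9⟩] :=
    ⟨by unfold glued; decide, by decide⟩
  exact hPs.sInf_length_eq bipartite_glued.1 (solves_glued_of_del true false) rfl

/-- There exists a bipartite graph `G = (A, B, E)` with
`bcevs(G) < bceovs(G, A)`; in fact one with `bcevs(G) = 2` and
`bceovs(G, A) = 3`. -/
theorem exists_bcevs_lt_bceovs :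
    ∃ G : BGraph, Bipartite G ∧ bcevs G = 2 ∧ bceovs G = 3 :=
  ⟨glued, bipartite_glued, bcevs_glued, bceovs_glued⟩

end BCE
end

section
/- For every integer k ≥ 2, every sequence of edge editions and vertex splittings that transforms the cycle C_{6k} on 6k vertices into a disjoint union of bicliques has length at least 2k. -/
namespace BCE

/-!
Call a walk `a-b-c-d` with `a` and `d` nonadjacent an obstruction: a disjoint union of bicliques has
none. Labelling each vertex produced by splittings with the vertex it descends from, an obstruction
of the original graph persists (as a walk labelled `a-b-c-d`, no edge being labelled `ad`) until
some operation deletes an edge labelled by one of its edges, adds an edge labelled `ad`, or splits a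
vertex labelled `b` or `c`; splitting a copy of an end only moves the walk to another copy. Hence if
no two obstructions share an inner vertex, an edge or the pair of ends, each operation breaks at
most one of them. In a cycle of length `m ≥ 7`, the walks starting at every third vertex form such a
family of size `⌊m / 3⌋`.
-/

/-- Every edge has its ends among the vertices of the graph. -/
def EdgesInVerts (G : BGraph) : Prop := ∀ x y, G.Adj x y → x ∈ verts G

/-- The vertex before the operation from which a vertex after it descends: a splitting of `v` sends
the new copy `v'` to `v`, and everything else descends from itself. -/
def Op.origin : Op → ℕ → ℕ
  | .split v v' _ _ => Function.update id v' v
  | _ => id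

/-- The vertex sequence of a walk with three edges, used as a pattern of labels. -/
structure FourPath (α : Type*) where
  a : α
  b : α
  c : α
  d : α

section Obstruction

variable {α : Type*} {G G' : BGraph} {f : ℕ → α} {P Q : FourPath α} {sA sB : Bool} {op : Op}

namespace FourPath

/-- The labels of the two inner vertices of a path. -/
def inner (P : FourPath α) : Set α := {P.b, P.c}

/-- The label pairs of the three edges of a path. -/
def edges (P : FourPath α) : Set (Sym2 α) := {s(P.a, P.b), s(P.b, P.c), s(P.c, P.d)}

/-- The label pair of the edge that a biclique would have to contain along with the path. -/
def closing (P : FourPath α) : Sym2 α := s(P.a, P.d)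

/-- Two paths that no single operation can break at once. -/
def Independent (P Q : FourPath α) : Prop :=
  Disjoint P.inner Q.inner ∧ Disjoint P.edges Q.edges ∧ P.closing ≠ Q.closing

/-- With the vertices of `G` labelled by `f`, some walk in `G` reads as `P` but no edge reads as the
closing pair of `P`. -/
def IsObstruction (P : FourPath α) (G : BGraph) (f : ℕ → α) : Prop :=
  (∃ x y z w, f x = P.a ∧ f y = P.b ∧ f z = P.c ∧ f w = P.d ∧
    G.Adj x y ∧ G.Adj y z ∧ G.Adj z w) ∧
  ∀ x w, G.Adj x w → s(f x, f w) ≠ P.closing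

end FourPath

/-- The only ways in which an operation, applied to a graph labelled by `f`, can turn `P` from an
obstruction into a non-obstruction. -/
def Op.Breaks (f : ℕ → α) (P : FourPath α) : Op → Prop
  | .del u v => s(f u, f v) ∈ P.edges
  | .add u v => s(f u, f v) = P.closing
  | .split v _ _ _ => f v ∈ P.inner

lemma FourPath.Independent.not_breaks (h : P.Independent Q) (hP : op.Breaks f P) :
    ¬ op.Breaks f Q := by
  obtain ⟨hinner, hedges, hclosing⟩ := h
  cases op with
  | del => exact Set.disjoint_left.1 hedges hP
  | add => exact fun hQ => hclosing (hP.symm.trans hQ)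
  | split => exact Set.disjoint_left.1 hinner hP

lemma OpStep.origin_eq_self (h : OpStep sA sB op G G') {x : ℕ} (hx : x ∈ verts G) :
    op.origin x = x := by
  cases h with
  | @split _ _ v v' _ _ _ hfresh =>
    have hne : x ≠ v' := by
      rintro rfl
      exact hfresh hx
    exact Function.update_of_ne hne v id
  | _ => rfl

lemma OpStep.mem_verts_of_origin_mem (h : OpStep sA sB op G G') {x : ℕ}
    (hx : op.origin x ∈ verts G) : x ∈ verts G' := by
  cases h with
  | del _ hA hB => rwa [verts, hA, hB]
  | add _ _ _ hA hB => rwa [verts, hA, hB]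
  | @split _ _ v v' _ _ hside _ _ hA hB =>
    have hverts : verts G' = insert v' (verts G) := by
      rcases hside with ⟨hv, -⟩ | ⟨hv, -⟩
      · rw [verts, (hA hv).1, (hA hv).2, verts, Set.insert_union]
      · rw [verts, (hB hv).1, (hB hv).2, verts, Set.union_insert]
    by_cases hxv : x = v'
    · exact hverts.superset (Or.inl hxv)
    · rw [Op.origin, Function.update_of_ne hxv] at hx
      exact hverts.superset (Or.inr hx)

section Split

variable {v v' : ℕ} {N₁ N₂ : Set ℕ}

lemma OpStep.adj_origin_of_split (h : OpStep sA sB (.split v v' N₁ N₂) G G')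
    (hG : EdgesInVerts G) {x y : ℕ} (hxy : G'.Adj x y) :
    G.Adj ((Op.split v v' N₁ N₂).origin x) ((Op.split v v' N₁ N₂).origin y) := by
  have horigin {a b : ℕ} (hab : G.Adj a b) : (Op.split v v' N₁ N₂).origin a = a :=
    h.origin_eq_self (hG a b hab)
  have horigin_copy : (Op.split v v' N₁ N₂).origin v' = v := Function.update_self ..
  cases h with
  | split _ _ hcover _ _ hadj =>
    have hN₁ {a : ℕ} (ha : a ∈ N₁) : G.Adj v a := hcover.subset (Or.inl ha)
    have hN₂ {a : ℕ} (ha : a ∈ N₂) : G.Adj v a := hcover.subset (Or.inr ha)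
    rcases (hadj x y).1 hxy with ⟨hxy, -⟩ | ⟨rfl, hy⟩ | ⟨rfl, hx⟩ | ⟨rfl, hy⟩ | ⟨rfl, hx⟩
    · rwa [horigin hxy, horigin (G.symm _ _ hxy)]
    · rw [horigin (hN₁ hy), horigin (G.symm _ _ (hN₁ hy))]
      exact hN₁ hy
    · rw [horigin (hN₁ hx), horigin (G.symm _ _ (hN₁ hx))]
      exact G.symm _ _ (hN₁ hx)
    · rw [horigin_copy, horigin (G.symm _ _ (hN₂ hy))]
      exact hN₂ hy
    · rw [horigin_copy, horigin (G.symm _ _ (hN₂ hx))]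
      exact G.symm _ _ (hN₂ hx)

lemma OpStep.exists_adj_of_split (h : OpStep sA sB (.split v v' N₁ N₂) G G')
    (hG : EdgesInVerts G) {x y : ℕ} (hxy : G.Adj x y) (hy : y ≠ v) :
    ∃ x', (Op.split v v' N₁ N₂).origin x' = x ∧ G'.Adj x' y := by
  have horigin := h.origin_eq_self (hG x y hxy)
  cases h with
  | split _ _ hcover _ _ hadj =>
    by_cases hx : x = v
    · subst hx
      rcases hcover.superset hxy with hy₁ | hy₂
      · exact ⟨x, horigin, (hadj x y).2 (Or.inr (Or.inl ⟨rfl, hy₁⟩))⟩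
      · exact ⟨v', Function.update_self ..,
          (hadj v' y).2 (Or.inr (Or.inr (Or.inr (Or.inl ⟨rfl, hy₂⟩))))⟩
    · exact ⟨x, horigin, (hadj x y).2 (Or.inl ⟨hxy, hx, hy⟩)⟩

end Split

lemma OpStep.edgesInVerts (h : OpStep sA sB op G G') (hG : EdgesInVerts G) : EdgesInVerts G' := by
  refine fun x y hxy => h.mem_verts_of_origin_mem ?_
  cases h with
  | del _ _ _ hadj => exact hG x y ((hadj x y).1 hxy).1
  | add hu hv _ _ _ hadj =>
    rcases (hadj x y).1 hxy with hxy | ⟨rfl, -⟩ | ⟨rfl, -⟩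
    · exact hG x y hxy
    · exact Or.inl hu
    · exact Or.inr hv
  | split hside hfresh hcover hA hB hadj =>
    exact hG _ _ ((OpStep.split hside hfresh hcover hA hB hadj).adj_origin_of_split hG hxy)

namespace FourPath.IsObstruction

lemma not_isBicliqueUnion (hP : P.IsObstruction G f) : ¬ IsBicliqueUnion G := by
  obtain ⟨⟨x, y, z, w, hx, -, -, hw, hxy, hyz, hzw⟩, hopen⟩ := hP
  intro hG
  refine hopen x w (hG x y z w hxy hyz hzw) ?_
  rw [hx, hw, closing]

lemma of_del (hP : P.IsObstruction G f) {u v : ℕ} (h : OpStep sA sB (.del u v) G G')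
    (hbreaks : s(f u, f v) ∉ P.edges) : P.IsObstruction G' f := by
  obtain ⟨⟨x, y, z, w, hx, hy, hz, hw, hxy, hyz, hzw⟩, hopen⟩ := hP
  cases h with
  | del _ _ _ hadj =>
    have hkeep {a b : ℕ} (hab : G.Adj a b) (hedge : s(f a, f b) ∈ P.edges) : G'.Adj a b := by
      refine (hadj a b).2 ⟨hab, ?_⟩
      rintro (⟨rfl, rfl⟩ | ⟨rfl, rfl⟩)
      · exact hbreaks hedge
      · exact hbreaks (Sym2.eq_swap ▸ hedge)
    exact ⟨⟨x, y, z, w, hx, hy, hz, hw, hkeep hxy (by simp [hx, hy, edges]),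
      hkeep hyz (by simp [hy, hz, edges]), hkeep hzw (by simp [hz, hw, edges])⟩,
      fun a b hab => hopen a b ((hadj a b).1 hab).1⟩

lemma of_add (hP : P.IsObstruction G f) {u v : ℕ} (h : OpStep sA sB (.add u v) G G')
    (hbreaks : s(f u, f v) ≠ P.closing) : P.IsObstruction G' f := by
  obtain ⟨⟨x, y, z, w, hx, hy, hz, hw, hxy, hyz, hzw⟩, hopen⟩ := hP
  cases h with
  | add _ _ _ _ _ hadj =>
    refine ⟨⟨x, y, z, w, hx, hy, hz, hw, (hadj _ _).2 (Or.inl hxy), (hadj _ _).2 (Or.inl hyz),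
      (hadj _ _).2 (Or.inl hzw)⟩, fun a b hab => ?_⟩
    rcases (hadj a b).1 hab with hab | ⟨rfl, rfl⟩ | ⟨rfl, rfl⟩
    · exact hopen a b hab
    · exact hbreaks
    · rwa [Sym2.eq_swap]

lemma of_split (hP : P.IsObstruction G f) {v v' : ℕ} {N₁ N₂ : Set ℕ}
    (h : OpStep sA sB (.split v v' N₁ N₂) G G') (hG : EdgesInVerts G)
    (hbreaks : f v ∉ P.inner) :
    P.IsObstruction G' (f ∘ (Op.split v v' N₁ N₂).origin) := by
  obtain ⟨⟨x, y, z, w, hx, hy, hz, hw, hxy, hyz, hzw⟩, hopen⟩ := hP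
  have hyv : y ≠ v := by
    rintro rfl
    exact hbreaks (Or.inl hy)
  have hzv : z ≠ v := by
    rintro rfl
    exact hbreaks (Or.inr hz)
  refine ⟨?_, fun a b hab => hopen _ _ (h.adj_origin_of_split hG hab)⟩
  obtain ⟨x', hx', hxy'⟩ := h.exists_adj_of_split hG hxy hyv
  obtain ⟨w', hw', hwz'⟩ := h.exists_adj_of_split hG (G.symm _ _ hzw) hzv
  refine ⟨x', y, z, w', by simp [hx', hx], ?_, ?_, by simp [hw', hw], hxy', ?_,
    G'.symm _ _ hwz'⟩
  · simp [h.origin_eq_self (hG y z hyz), hy]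
  · simp [h.origin_eq_self (hG z w hzw), hz]
  · cases h with
    | split _ _ _ _ _ hadj => exact (hadj y z).2 (Or.inl ⟨hyz, hyv, hzv⟩)

lemma of_opStep (hP : P.IsObstruction G f) (h : OpStep sA sB op G G') (hG : EdgesInVerts G)
    (hbreaks : ¬ op.Breaks f P) : P.IsObstruction G' (f ∘ op.origin) := by
  cases op with
  | del => exact hP.of_del h hbreaks
  | add => exact hP.of_add h hbreaks
  | split => exact hP.of_split h hG hbreaks

end FourPath.IsObstruction

open Classical in
lemma card_filter_breaks_le_one {ι : Type*} {P : ι → FourPath α} {S : Finset ι}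
    (hS : (S : Set ι).Pairwise fun i j => (P i).Independent (P j)) (op : Op) (f : ℕ → α) :
    (S.filter fun i => op.Breaks f (P i)).card ≤ 1 := by
  refine Finset.card_le_one.2 fun i hi j hj => ?_
  rw [Finset.mem_filter] at hi hj
  by_contra hij
  exact (hS hi.1 hj.1 hij).not_breaks hi.2 hj.2

theorem card_le_length_of_independent_obstructions {ι : Type*} {P : ι → FourPath α} {L : List Op}
    (hG : EdgesInVerts G) (happ : ApplySeq sA sB L G G') (hbic : IsBicliqueUnion G')
    {S : Finset ι} (hS : (S : Set ι).Pairwise fun i j => (P i).Independent (P j))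
    (hobs : ∀ i ∈ S, (P i).IsObstruction G f) : S.card ≤ L.length := by
  classical
  induction L generalizing G f S with
  | nil =>
    obtain rfl : G' = G := happ
    rw [Finset.eq_empty_of_forall_notMem fun i hi => (hobs i hi).not_isBicliqueUnion hbic]
    rfl
  | cons op L ih =>
    obtain ⟨G₁, hstep, happ⟩ := happ
    have hbroken := card_filter_breaks_le_one hS op f
    have hunbroken : (S.filter fun i => ¬ op.Breaks f (P i)).card ≤ L.length := by
      refine ih (f := f ∘ op.origin) (hstep.edgesInVerts hG) happ
        (hS.mono (Finset.coe_subset.2 (Finset.filter_subset _ _))) fun i hi => ?_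
      rw [Finset.mem_filter] at hi
      exact (hobs i hi.1).of_opStep hstep hG hi.2
    calc S.card
        = (S.filter fun i => op.Breaks f (P i)).card +
            (S.filter fun i => ¬ op.Breaks f (P i)).card :=
          (Finset.card_filter_add_card_filter_not _).symm
      _ ≤ 1 + L.length := add_le_add hbroken hunbroken
      _ = (op :: L).length := by rw [List.length_cons, add_comm]

end Obstruction

section Cycle

/-- The periodic continuation of the vertices `p 0, …, p (m - 1)` of a cycle of length `m`, so that
walks around the cycle need no reduction of indices. -/
def cyclicExtension {α : Type*} (p : ℕ → α) (m i : ℕ) : α := p (i % m)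

/-- The walk with three edges that starts at position `i` of a sequence. -/
def FourPath.ofSeq {α : Type*} (q : ℕ → α) (i : ℕ) : FourPath α :=
  ⟨q i, q (i + 1), q (i + 2), q (i + 3)⟩

variable {α : Type*} {p : ℕ → α} {m : ℕ}

lemma cyclicExtension_eq_iff (hp : Set.InjOn p (Set.Iio m)) (hm : 0 < m) {i j : ℕ} :
    cyclicExtension p m i = cyclicExtension p m j ↔ i ≡ j [MOD m] :=
  hp.eq_iff (Nat.mod_lt i hm) (Nat.mod_lt j hm)

lemma cyclicExtension_injOn (hp : Set.InjOn p (Set.Iio m)) :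
    Set.InjOn (cyclicExtension p m) (Set.Iio m) := fun _ hi _ hj hij =>
  Nat.ModEq.eq_of_lt_of_lt ((cyclicExtension_eq_iff hp (Nat.zero_lt_of_lt hi)).1 hij) hi hj

lemma cyclicExtension_chord_injOn (hp : Set.InjOn p (Set.Iio m)) {d : ℕ} (hd : 2 * d < m) :
    Set.InjOn (fun i => s(cyclicExtension p m i, cyclicExtension p m (i + d))) (Set.Iio m) := by
  intro i hi j hj hij
  simp only [Sym2.eq_iff, cyclicExtension_eq_iff hp (Nat.zero_lt_of_lt hd)] at hij
  obtain ⟨hmod, -⟩ | ⟨hij, hji⟩ := hij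
  · exact hmod.eq_of_lt_of_lt hi hj
  · have hmod : i + 2 * d ≡ i + 0 [MOD m] := by
      rw [two_mul, ← add_assoc]
      exact (hji.add_right d).trans hij.symm
    obtain rfl : d = 0 := by
      have := (Nat.ModEq.add_left_cancel' i hmod).eq_of_lt_of_lt hd (by omega)
      omega
    exact hij.eq_of_lt_of_lt hi hj

lemma FourPath.inner_ofSeq (q : ℕ → α) (i : ℕ) : (ofSeq q i).inner = q '' {i + 1, i + 2} :=
  (Set.image_pair q (i + 1) (i + 2)).symm

lemma FourPath.edges_ofSeq (q : ℕ → α) (i : ℕ) :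
    (ofSeq q i).edges = (fun j => s(q j, q (j + 1))) '' {i, i + 1, i + 2} := by
  simp only [edges, ofSeq, Set.image_insert_eq, Set.image_singleton]

lemma FourPath.independent_ofSeq_cyclicExtension (hp : Set.InjOn p (Set.Iio m)) (hm : 7 ≤ m)
    {i j : ℕ} (hi : i + 2 < m) (hj : j + 2 < m) (hij : i + 3 ≤ j ∨ j + 3 ≤ i) :
    (ofSeq (cyclicExtension p m) i).Independent (ofSeq (cyclicExtension p m) j) := by
  refine ⟨?_, ?_, fun hclosing => ?_⟩
  · rw [inner_ofSeq, inner_ofSeq]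
    refine Disjoint.image ?_ (cyclicExtension_injOn hp) ?_ ?_ <;> grind
  · rw [edges_ofSeq, edges_ofSeq]
    refine Disjoint.image ?_ (cyclicExtension_chord_injOn hp (by omega)) ?_ ?_ <;> grind
  · have := cyclicExtension_chord_injOn hp (d := 3) (by omega)
      (show i < m by omega) (show j < m by omega) hclosing
    omega

end Cycle

namespace IsCycleWith

variable {G : BGraph} {p : ℕ → ℕ} {m : ℕ}

lemma injOn (h : IsCycleWith G p m) : Set.InjOn p (Set.Iio m) :=
  fun i hi j hj hij => h.1 i j hi hj hij

lemma edgesInVerts (h : IsCycleWith G p m) : EdgesInVerts G := by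
  obtain ⟨-, hA, hB, hadj⟩ := h
  have hp {i : ℕ} (hi : i < m) : p i ∈ verts G :=
    (Nat.mod_two_eq_zero_or_one i).imp (fun hpar => hA ▸ ⟨i, ⟨hi, hpar⟩, rfl⟩)
      fun hpar => hB ▸ ⟨i, ⟨hi, hpar⟩, rfl⟩
  intro x y hxy
  obtain ⟨i, hi, ⟨rfl, -⟩ | ⟨-, rfl⟩⟩ := (hadj x y).1 hxy
  · exact hp hi
  · exact hp (Nat.mod_lt _ (Nat.zero_lt_of_lt hi))

lemma adj_cyclicExtension_iff (h : IsCycleWith G p m) (hm : 0 < m) {i j : ℕ} :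
    G.Adj (cyclicExtension p m i) (cyclicExtension p m j) ↔
      j ≡ i + 1 [MOD m] ∨ i ≡ j + 1 [MOD m] := by
  have heq {a b : ℕ} := cyclicExtension_eq_iff h.injOn hm (i := a) (j := b)
  refine (h.2.2.2 _ _).trans ⟨?_, ?_⟩
  · have hext {t : ℕ} (ht : t < m) : p t = cyclicExtension p m t := by
      rw [cyclicExtension, Nat.mod_eq_of_lt ht]
    rintro ⟨t, ht, ⟨hi, hj⟩ | ⟨hj, hi⟩⟩
    · rw [hext ht, heq] at hi
      exact Or.inl ((heq.1 hj).trans (hi.symm.add_right 1))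
    · rw [hext ht, heq] at hj
      exact Or.inr ((heq.1 hi).trans (hj.symm.add_right 1))
  · have hsucc (t : ℕ) : p ((t % m + 1) % m) = cyclicExtension p m (t + 1) := by
      rw [cyclicExtension, Nat.mod_add_mod]
    rintro (hj | hi)
    · exact ⟨i % m, Nat.mod_lt i hm, Or.inl ⟨rfl, (heq.2 hj).trans (hsucc i).symm⟩⟩
    · exact ⟨j % m, Nat.mod_lt j hm, Or.inr ⟨rfl, (heq.2 hi).trans (hsucc j).symm⟩⟩

lemma isObstruction_ofSeq (h : IsCycleWith G p m) (hm : 5 ≤ m) (i : ℕ) :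
    (FourPath.ofSeq (cyclicExtension p m) i).IsObstruction G id := by
  have hadj (j : ℕ) : G.Adj (cyclicExtension p m j) (cyclicExtension p m (j + 1)) :=
    (h.adj_cyclicExtension_iff (by omega)).2 (Or.inl rfl)
  refine ⟨⟨_, _, _, _, rfl, rfl, rfl, rfl, hadj i, hadj (i + 1), hadj (i + 2)⟩, ?_⟩
  have hopen : ¬ G.Adj (cyclicExtension p m i) (cyclicExtension p m (i + 3)) := by
    rw [h.adj_cyclicExtension_iff (by omega)]
    rintro (hmod | hmod)
    · have := (Nat.ModEq.add_left_cancel' i hmod).eq_of_lt_of_lt (by omega) (by omega)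
      omega
    · have hmod : i + 0 ≡ i + 4 [MOD m] := hmod
      have := (Nat.ModEq.add_left_cancel' i hmod).eq_of_lt_of_lt (by omega) (by omega)
      omega
  intro x w hxw hclosing
  rcases Sym2.eq_iff.1 hclosing with ⟨rfl, rfl⟩ | ⟨rfl, rfl⟩
  · exact hopen hxw
  · exact hopen (G.symm _ _ hxw)

end IsCycleWith

theorem cycle_lower_bound_general {sA sB : Bool} {m : ℕ} (hm : 7 ≤ m) {G G' : BGraph} {p : ℕ → ℕ}
    (hcyc : IsCycleWith G p m) {L : List Op} (happ : ApplySeq sA sB L G G')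
    (hbic : IsBicliqueUnion G') : m / 3 ≤ L.length := by
  have hlt {i : ℕ} (hi : i ∈ (Finset.range (m / 3) : Set ℕ)) : 3 * i + 2 < m := by
    have := Finset.mem_range.1 hi
    omega
  rw [← Finset.card_range (m / 3)]
  exact card_le_length_of_independent_obstructions hcyc.edgesInVerts happ hbic
    (fun i hi j hj hij =>
      FourPath.independent_ofSeq_cyclicExtension hcyc.injOn hm (hlt hi) (hlt hj) (by omega))
    fun i _ => hcyc.isObstruction_ofSeq (by omega) (3 * i)

/-- For every `k ≥ 2`, every sequence of edge editions and
vertex splittings transforming the cycle `C_{6k}` into a disjoint union of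
bicliques has length at least `2k`. -/
theorem cycle_lower_bound (k : ℕ) (hk : 2 ≤ k) (G : BGraph) (p : ℕ → ℕ)
    (hcyc : IsCycleWith G p (6 * k)) (L : List Op) (G' : BGraph)
    (happ : ApplySeq true true L G G') (hbic : IsBicliqueUnion G') :
    2 * k ≤ L.length := by
  have := cycle_lower_bound_general (by omega) hcyc happ hbic
  omega

end BCE
end

section
/- A path with l edges requires at least ⌊l/3⌋ edge editions and vertex splittings to be transformed into a disjoint union of bicliques. -/
namespace BCE

/-- A quadruple of vertices is an obstruction to being a disjoint union of bicliques if it is a walk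
with non-adjacent ends. The vertices need not be distinct. -/
structure IsObstruction (G : BGraph) (q : Fin 4 → ℕ) : Prop where
  adj₀₁ : G.Adj (q 0) (q 1)
  adj₁₂ : G.Adj (q 1) (q 2)
  adj₂₃ : G.Adj (q 2) (q 3)
  not_adj_ends : ¬ G.Adj (q 0) (q 3)

/-- The inner vertices of the quadruple `q` avoid the quadruple `r`, and `q` and `r` have different
unordered pairs of ends. The relation is not symmetric by itself, but is used for all ordered pairs
of distinct members of a family. -/
structure Separated (q r : Fin 4 → ℕ) : Prop where
  inner_ne : ∀ k, r k ≠ q 1 ∧ r k ≠ q 2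
  ends_ne : s(q 0, q 3) ≠ s(r 0, r 3)

/-- The operation may turn the obstruction `q` into a non-obstruction. A splitting at an end of `q`
is harmless, since the neighbouring inner vertex keeps one of the two copies as a neighbour. -/
def Op.Destroys : Op → (Fin 4 → ℕ) → Prop
  | .del u v, q => s(u, v) = s(q 0, q 1) ∨ s(u, v) = s(q 1, q 2) ∨ s(u, v) = s(q 2, q 3)
  | .add u v, q => s(u, v) = s(q 0, q 3)
  | .split v _ _ _, q => v = q 1 ∨ v = q 2

theorem IsBicliqueUnion.not_isObstruction {G : BGraph} (hG : IsBicliqueUnion G) (q : Fin 4 → ℕ) :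
    ¬ IsObstruction G q :=
  fun hq => hq.not_adj_ends (hG _ _ _ _ hq.adj₀₁ hq.adj₁₂ hq.adj₂₃)

theorem Separated.of_comp {π : ℕ → ℕ} {q r : Fin 4 → ℕ} (h : Separated (π ∘ q) (π ∘ r)) :
    Separated q r where
  inner_ne k := (h.inner_ne k).imp (mt (congrArg π)) (mt (congrArg π))
  ends_ne := mt (congrArg (Sym2.map π)) h.ends_ne

theorem Separated.not_destroys {q r : Fin 4 → ℕ} (h : Separated q r) {op : Op}
    (hq : op.Destroys q) : ¬ op.Destroys r := by
  intro hr
  have hinner := h.inner_ne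
  cases op with
  | del u v =>
    have inner_mem : q 1 ∈ s(u, v) ∨ q 2 ∈ s(u, v) := by
      rcases hq with hq | hq | hq <;> simp [hq]
    have mem_range : ∀ x ∈ s(u, v), ∃ k, r k = x := by
      rcases hr with hr | hr | hr <;> simp [hr]
    rcases inner_mem with hx | hx
    · obtain ⟨k, hk⟩ := mem_range _ hx
      exact (hinner k).1 hk
    · obtain ⟨k, hk⟩ := mem_range _ hx
      exact (hinner k).2 hk
  | add u v => exact h.ends_ne (hq.symm.trans hr)
  | split v _ _ _ =>
    rcases hq with rfl | rfl <;> rcases hr with hr | hr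
    · exact (hinner 1).1 hr.symm
    · exact (hinner 2).1 hr.symm
    · exact (hinner 1).2 hr.symm
    · exact (hinner 2).2 hr.symm

section Step

open Function

variable {sA sB : Bool} {op : Op} {G G' : BGraph} {v v' : ℕ} {N₁ N₂ : Set ℕ}

theorem OpStep.mem_verts_of_split (h : OpStep sA sB (.split v v' N₁ N₂) G G') : v ∈ verts G := by
  cases h with
  | split hside => exact hside.imp And.left And.left

theorem OpStep.verts_of_split (h : OpStep sA sB (.split v v' N₁ N₂) G G') :
    verts G' = insert v' (verts G) := by
  cases h with
  | split hside _ _ hA hB =>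
    rcases hside with ⟨hv, -⟩ | ⟨hv, -⟩
    · rw [verts, (hA hv).1, (hA hv).2, Set.insert_union, verts]
    · rw [verts, (hB hv).1, (hB hv).2, Set.union_insert, verts]

theorem EdgesInVerts.opStep (hG : EdgesInVerts G) (h : OpStep sA sB op G G') :
    EdgesInVerts G' := by
  intro x y hxy
  cases h with
  | del _ hA hB hadj =>
    rw [verts, hA, hB]
    exact hG x y ((hadj x y).1 hxy).1
  | add hu hv _ hA hB hadj =>
    rw [verts, hA, hB]
    rcases (hadj x y).1 hxy with hxy | ⟨rfl, -⟩ | ⟨rfl, -⟩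
    · exact hG x y hxy
    · exact Or.inl hu
    · exact Or.inr hv
  | @split _ _ v v' N₁ N₂ hside hfresh hcover hA hB hadj =>
    have hsplit : OpStep sA sB (.split v v' N₁ N₂) G G' := .split hside hfresh hcover hA hB hadj
    have cover_subset : N₁ ∪ N₂ ⊆ verts G := fun z hz =>
      hG z v (G.symm v z (hcover.subset hz))
    rw [hsplit.verts_of_split]
    rcases (hadj x y).1 hxy with ⟨hxy, -, -⟩ | ⟨rfl, -⟩ | ⟨-, hx⟩ | ⟨rfl, -⟩ | ⟨-, hx⟩
    · exact Or.inr (hG x y hxy)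
    · exact Or.inr hsplit.mem_verts_of_split
    · exact Or.inr (cover_subset (Or.inl hx))
    · exact Or.inl rfl
    · exact Or.inr (cover_subset (Or.inr hx))

theorem OpStep.ne_fresh_of_adj (hG : EdgesInVerts G)
    (h : OpStep sA sB (.split v v' N₁ N₂) G G') {x y : ℕ} (hxy : G.Adj x y) : x ≠ v' := by
  cases h with
  | split _ hfresh => exact ne_of_mem_of_not_mem (hG x y hxy) hfresh

theorem OpStep.adj_contract (hG : EdgesInVerts G) (h : OpStep sA sB (.split v v' N₁ N₂) G G')
    {x y : ℕ} (hxy : G'.Adj x y) : G.Adj (update id v' v x) (update id v' v y) := by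
  have contract_eq : ∀ {z w}, G.Adj z w → update id v' v z = z := fun hzw =>
    update_of_ne (h.ne_fresh_of_adj hG hzw) _ _
  have contract_v : update id v' v v = v := by by_cases hv : v = v' <;> simp [hv]
  cases h with
  | split _ _ hcover _ _ hadj =>
    have adj_of_mem : ∀ {z}, z ∈ N₁ ∪ N₂ → G.Adj v (update id v' v z) := fun {z} hz => by
      have hvz : G.Adj v z := hcover.subset hz
      rwa [contract_eq (G.symm v z hvz)]
    rcases (hadj x y).1 hxy with ⟨hxy, -, -⟩ | ⟨rfl, hy⟩ | ⟨rfl, hx⟩ | ⟨rfl, hy⟩ | ⟨rfl, hx⟩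
    · rwa [contract_eq hxy, contract_eq (G.symm x y hxy)]
    · rw [contract_v]
      exact adj_of_mem (Or.inl hy)
    · rw [contract_v]
      exact G.symm _ _ (adj_of_mem (Or.inl hx))
    · rw [update_self]
      exact adj_of_mem (Or.inr hy)
    · rw [update_self]
      exact G.symm _ _ (adj_of_mem (Or.inr hx))

theorem OpStep.exists_adj_lift (hG : EdgesInVerts G) (h : OpStep sA sB (.split v v' N₁ N₂) G G')
    {x y : ℕ} (hxy : G.Adj x y) (hy : y ≠ v) :
    ∃ x', update id v' v x' = x ∧ G'.Adj x' y := by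
  have contract_x : update id v' v x = x := update_of_ne (h.ne_fresh_of_adj hG hxy) _ _
  cases h with
  | split _ _ hcover _ _ hadj =>
    by_cases hx : x = v
    · subst hx
      rcases hcover.superset hxy with hy₁ | hy₂
      · exact ⟨x, contract_x, (hadj _ _).2 (Or.inr (Or.inl ⟨rfl, hy₁⟩))⟩
      · exact ⟨v', update_self .., (hadj _ _).2 (by simp [hy₂])⟩
    · exact ⟨x, contract_x, (hadj _ _).2 (Or.inl ⟨hxy, hx, hy⟩)⟩

theorem IsObstruction.exists_lift_of_split {q : Fin 4 → ℕ} (hq : IsObstruction G q)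
    (hG : EdgesInVerts G) (h : OpStep sA sB (.split v v' N₁ N₂) G G') (h₁ : q 1 ≠ v)
    (h₂ : q 2 ≠ v) : ∃ q', update id v' v ∘ q' = q ∧ IsObstruction G' q' := by
  obtain ⟨a, ha, hadj_a⟩ := h.exists_adj_lift hG hq.adj₀₁ h₁
  obtain ⟨d, hd, hadj_d⟩ := h.exists_adj_lift hG (G.symm _ _ hq.adj₂₃) h₂
  have contract₁ : update id v' v (q 1) = q 1 := update_of_ne (h.ne_fresh_of_adj hG hq.adj₁₂) _ _
  have contract₂ : update id v' v (q 2) = q 2 := update_of_ne (h.ne_fresh_of_adj hG hq.adj₂₃) _ _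
  have inner_adj : G'.Adj (q 1) (q 2) := by
    cases h with
    | split _ _ _ _ _ hadj => exact (hadj _ _).2 (Or.inl ⟨hq.adj₁₂, h₁, h₂⟩)
  refine ⟨![a, q 1, q 2, d], ?_, hadj_a, inner_adj, G'.symm _ _ hadj_d,
    fun hadj_ad : G'.Adj a d => hq.not_adj_ends ?_⟩
  · ext k
    fin_cases k
    exacts [ha, contract₁, contract₂, hd]
  · simpa only [ha, hd] using h.adj_contract hG hadj_ad

theorem OpStep.exists_lift (hG : EdgesInVerts G) (h : OpStep sA sB op G G') :
    ∃ π : ℕ → ℕ, ∀ q, IsObstruction G q → ¬ op.Destroys q →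
      ∃ q', π ∘ q' = q ∧ IsObstruction G' q' := by
  cases h with
  | @del _ _ u v _ _ _ hadj =>
    refine ⟨id, fun q hq hsurv => ⟨q, rfl, ?_⟩⟩
    have adj_of_ne : ∀ {x y}, G.Adj x y → s(u, v) ≠ s(x, y) → G'.Adj x y := fun hxy hne =>
      (hadj _ _).2 ⟨hxy, fun heq => hne (Sym2.eq_iff.2 heq).symm⟩
    simp only [Op.Destroys, not_or] at hsurv
    exact ⟨adj_of_ne hq.adj₀₁ hsurv.1, adj_of_ne hq.adj₁₂ hsurv.2.1, adj_of_ne hq.adj₂₃ hsurv.2.2,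
      fun had => hq.not_adj_ends ((hadj _ _).1 had).1⟩
  | add _ _ _ _ _ hadj =>
    have mono : ∀ {x y}, G.Adj x y → G'.Adj x y := fun hxy => (hadj _ _).2 (Or.inl hxy)
    refine ⟨id, fun q hq hsurv => ⟨q, rfl, mono hq.adj₀₁, mono hq.adj₁₂, mono hq.adj₂₃, ?_⟩⟩
    intro had
    rcases (hadj _ _).1 had with had | heq
    · exact hq.not_adj_ends had
    · exact hsurv (Sym2.eq_iff.2 heq).symm
  | @split _ _ v v' _ _ hside hfresh hcover hA hB hadj =>
    refine ⟨update id v' v, fun q hq hsurv => ?_⟩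
    obtain ⟨h₁, h₂⟩ := not_or.1 hsurv
    exact hq.exists_lift_of_split hG (.split hside hfresh hcover hA hB hadj) (Ne.symm h₁)
      (Ne.symm h₂)

end Step

theorem card_le_length_of_pairwise_separated {ι : Type*} {sA sB : Bool} {L : List Op}
    {G G' : BGraph} {w : ι → Fin 4 → ℕ} (hG : EdgesInVerts G) (hw : ∀ i, IsObstruction G (w i))
    (hsep : Pairwise fun i j => Separated (w i) (w j)) (happ : ApplySeq sA sB L G G')
    (hbic : IsBicliqueUnion G') : ENat.card ι ≤ L.length := by
  induction L generalizing ι G with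
  | nil =>
    obtain rfl : G' = G := happ
    have : IsEmpty ι := ⟨fun i => hbic.not_isObstruction _ (hw i)⟩
    simpa [ENat.card_eq_zero_iff_empty] using this
  | cons op L ih =>
    obtain ⟨H, hstep, happ⟩ := happ
    obtain ⟨π, lift⟩ := hstep.exists_lift hG
    let destroyed : Set ι := {i | op.Destroys (w i)}
    have destroyed_le_one : destroyed.encard ≤ 1 :=
      Set.encard_le_one_iff_subsingleton.2 fun i hi j hj =>
        by_contra fun hij => (hsep hij).not_destroys hi hj
    choose w' w'_lift w'_obstruction using fun i : ↥destroyedᶜ => lift _ (hw i) i.2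
    have w'_sep : Pairwise fun i j => Separated (w' i) (w' j) := fun i j hij =>
      .of_comp (π := π) (by
        rw [w'_lift, w'_lift]
        exact hsep (Subtype.coe_injective.ne hij))
    calc
      ENat.card ι = destroyedᶜ.encard + destroyed.encard := by
        rw [add_comm, Set.encard_add_encard_compl, Set.encard_univ]
      _ ≤ L.length + 1 := add_le_add (ih (hG.opStep hstep) w'_obstruction w'_sep happ)
        destroyed_le_one
      _ = (op :: L).length := by simp

namespace IsPathWith

variable {G : BGraph} {p : ℕ → ℕ} {l i j : ℕ}

theorem edgesInVerts (h : IsPathWith G p l) : EdgesInVerts G := by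
  obtain ⟨-, hA, hB, hadj⟩ := h
  have mem_verts : ∀ i ≤ l, p i ∈ verts G := fun i hi => by
    rcases Nat.mod_two_eq_zero_or_one i with heven | hodd
    · exact Or.inl (hA ▸ ⟨i, ⟨hi, heven⟩, rfl⟩)
    · exact Or.inr (hB ▸ ⟨i, ⟨hi, hodd⟩, rfl⟩)
  intro x y hxy
  obtain ⟨i, hi, ⟨rfl, -⟩ | ⟨-, rfl⟩⟩ := (hadj x y).1 hxy
  · exact mem_verts i hi.le
  · exact mem_verts (i + 1) hi

theorem apply_eq_iff (h : IsPathWith G p l) (hi : i ≤ l) (hj : j ≤ l) : p i = p j ↔ i = j :=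
  ⟨h.1 i j hi hj, congrArg p⟩

theorem adj_iff (h : IsPathWith G p l) (hi : i ≤ l) (hj : j ≤ l) :
    G.Adj (p i) (p j) ↔ j = i + 1 ∨ i = j + 1 := by
  rw [h.2.2.2]
  constructor
  · rintro ⟨k, hk, heq⟩
    rw [h.apply_eq_iff hi hk.le, h.apply_eq_iff hj hk, h.apply_eq_iff hj hk.le,
      h.apply_eq_iff hi hk] at heq
    omega
  · rintro (rfl | rfl)
    · exact ⟨i, hj, Or.inl ⟨rfl, rfl⟩⟩
    · exact ⟨j, hi, Or.inr ⟨rfl, rfl⟩⟩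

theorem isObstruction (h : IsPathWith G p l) (hi : i + 3 ≤ l) :
    IsObstruction G fun k => p (i + k) := by
  constructor <;> simp only [Fin.isValue, Fin.coe_ofNat_eq_mod] <;>
    rw [h.adj_iff (by omega) (by omega)] <;> omega

theorem separated (h : IsPathWith G p l) (hi : i + 3 ≤ l) (hj : j + 3 ≤ l)
    (hij : i + 3 ≤ j ∨ j + 3 ≤ i) : Separated (fun k => p (i + k)) fun k => p (j + k) where
  inner_ne k := by
    simp only [Ne, Fin.coe_ofNat_eq_mod]
    rw [h.apply_eq_iff (by omega) (by omega), h.apply_eq_iff (by omega) (by omega)]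
    omega
  ends_ne := by
    simp only [Ne, Sym2.eq_iff, Fin.coe_ofNat_eq_mod]
    rw [h.apply_eq_iff (by omega) (by omega), h.apply_eq_iff (by omega) (by omega),
      h.apply_eq_iff (by omega) (by omega), h.apply_eq_iff (by omega) (by omega)]
    omega

end IsPathWith

/-- A path with `l` edges requires at least `⌊l/3⌋` edge
editions and vertex splittings to be transformed into a disjoint union of
bicliques. -/
theorem path_lower_bound (l : ℕ) (G : BGraph) (p : ℕ → ℕ)
    (hpath : IsPathWith G p l) (L : List Op) (G' : BGraph)
    (happ : ApplySeq true true L G G') (hbic : IsBicliqueUnion G') :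
    l / 3 ≤ L.length := by
  let w (i : Fin (l / 3)) (k : Fin 4) : ℕ := p (3 * i + k)
  have w_obstruction (i) : IsObstruction G (w i) := hpath.isObstruction (by omega)
  have w_sep : Pairwise fun i j => Separated (w i) (w j) := fun i j hij =>
    hpath.separated (by omega) (by omega) (by omega)
  simpa using card_le_length_of_pairwise_separated hpath.edgesInVerts w_obstruction w_sep happ hbic

end BCE
end
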